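/- Let A be the adjacency matrix of a simple undirected graph G on n ≥ 1 vertices with m ≥ 1 edges that is not regular in the sense that eᵀA e ≠ 0 and eᵀA² e ≠ 0 (which holds whenever m ≥ 1). Let Δ be the number of triangles of G, P₂ the number of distinct simple paths of length 2, P₃ the number of distinct simple paths of length 3, and Var(deg) = (1/n) Σ_v deg(v)² − ((1/n) Σ_v deg(v))². Then the (1,2)-entry of the covariance representation satisfies C^A_{1,2} = (n/(2m)) · (3Δ + P₃ + n·Var(deg) + m·(4m/n − 1)) / (P₂ + m) − 1. -/

import Mathlib

/-!
The covariance unfolds to `n · eᵀA³e / ((eᵀAe)(eᵀA²e)) - 1`, because both normalised vectors have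
mean `1` and `(Ae)ᵀ(A²e) = eᵀA³e`. The three quantities `eᵀAᵏe` count walks of length `k`:

* `eᵀAe = ∑ deg = 2m` (handshake lemma);
* `eᵀA²e = ∑ deg² = 2P₂ + 2m`, a walk `a b c` being a path or having `a = c`
  (`sum_degree_sq_eq`);
* `eᵀA³e = 2P₃ + 6Δ + 2 ∑ deg² - 2m`. A walk `a b c d` is a path, or has `a = d` and traverses a
  triangle (each triangle is traversed in `6` ways, `card_triangle_triples`), or has `a = c`, or
  has `b = d`. Each of the last two families has `∑ deg²` members, and they share the `2m` walks
  `a b a b` (`sum_walks_three_eq`).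

Finally `n · Var(deg) = ∑ deg² - 4m²/n` turns this into the stated formula.
-/


open Matrix BigOperators

/-- The sample covariance `Cov(x, y) = (1/n) Σᵢ (x i − x̄)(y i − ȳ)` of two vectors in `ℝ^n`. -/
noncomputable def sampleCov {n : ℕ} (x y : Fin n → ℝ) : ℝ :=
  ((1 : ℝ) / n) * ∑ i, (x i - ((1 : ℝ) / n) * ∑ j, x j) * (y i - ((1 : ℝ) / n) * ∑ j, y j)

/-- The all-ones vector `e ∈ ℝ^n`. -/
def onesVec (n : ℕ) : Fin n → ℝ := fun _ => 1

/-- The number of walks of length 2 in `G` that are paths (each undirected simple path of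
length 2 counted once in each direction, so this equals `2P₂`). -/
def pathWalks2 {n : ℕ} (G : SimpleGraph (Fin n)) [DecidableRel G.Adj] : ℕ :=
  (Finset.univ.filter (fun p : Fin n × Fin n × Fin n =>
    G.Adj p.1 p.2.1 ∧ G.Adj p.2.1 p.2.2 ∧
      p.1 ≠ p.2.1 ∧ p.2.1 ≠ p.2.2 ∧ p.1 ≠ p.2.2)).card

/-- The number of walks of length 3 in `G` that are paths (each undirected simple path of
length 3 counted once in each direction, so this equals `2P₃`). -/
def pathWalks3 {n : ℕ} (G : SimpleGraph (Fin n)) [DecidableRel G.Adj] : ℕ :=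
  (Finset.univ.filter (fun p : Fin n × Fin n × Fin n × Fin n =>
    G.Adj p.1 p.2.1 ∧ G.Adj p.2.1 p.2.2.1 ∧ G.Adj p.2.2.1 p.2.2.2 ∧
      p.1 ≠ p.2.1 ∧ p.1 ≠ p.2.2.1 ∧ p.1 ≠ p.2.2.2 ∧
      p.2.1 ≠ p.2.2.1 ∧ p.2.1 ≠ p.2.2.2 ∧ p.2.2.1 ≠ p.2.2.2)).card

/-- The variance of the degree sequence:
`Var(deg) = (1/n) Σ_v deg(v)² − ((1/n) Σ_v deg(v))²`. -/
noncomputable def degVar {n : ℕ} (G : SimpleGraph (Fin n)) [DecidableRel G.Adj] : ℝ :=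
  ((1 : ℝ) / n) * ∑ v, (G.degree v : ℝ) ^ 2 - (((1 : ℝ) / n) * ∑ v, (G.degree v : ℝ)) ^ 2

/-- Each triangle is the vertex set of exactly six ordered triples of pairwise adjacent vertices. -/
lemma card_triangle_triples {n : ℕ} (G : SimpleGraph (Fin n)) [DecidableRel G.Adj] :
    (Finset.univ.filter (fun p : Fin n × Fin n × Fin n =>
      G.Adj p.1 p.2.1 ∧ G.Adj p.2.1 p.2.2 ∧ G.Adj p.2.2 p.1)).card
      = 6 * (G.cliqueFinset 3).card := by
  rw [Finset.card_eq_sum_card_fiberwise (f := fun p => ({p.1, p.2.1, p.2.2} : Finset (Fin n)))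
    (t := G.cliqueFinset 3)]
  · rw [Finset.sum_const_nat (m := 6), mul_comm]
    intro s hs
    rw [SimpleGraph.mem_cliqueFinset_iff, SimpleGraph.is3Clique_iff] at hs
    obtain ⟨x, y, z, hxy, hxz, hyz, rfl⟩ := hs
    have h1 := hxy.ne
    have h2 := hxz.ne
    have h3 := hyz.ne
    have key : (Finset.univ.filter (fun p : Fin n × Fin n × Fin n =>
        G.Adj p.1 p.2.1 ∧ G.Adj p.2.1 p.2.2 ∧ G.Adj p.2.2 p.1)).filter
          (fun p => ({p.1, p.2.1, p.2.2} : Finset (Fin n)) = {x, y, z})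
        = {(x, y, z), (x, z, y), (y, x, z), (y, z, x), (z, x, y), (z, y, x)} := by
      ext ⟨a, b, c⟩
      simp only [Finset.mem_filter, Finset.mem_univ, true_and, Finset.mem_insert,
        Finset.mem_singleton, Prod.mk.injEq]
      constructor
      · rintro ⟨⟨hab, hbc, hca⟩, h⟩
        have ha : a ∈ ({x, y, z} : Finset (Fin n)) := h ▸ by simp
        have hb : b ∈ ({x, y, z} : Finset (Fin n)) := h ▸ by simp
        have hc : c ∈ ({x, y, z} : Finset (Fin n)) := h ▸ by simp
        have := hab.ne
        have := hbc.ne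
        have := hca.ne
        simp only [Finset.mem_insert, Finset.mem_singleton] at ha hb hc
        grind
      · have := hxy.symm
        have := hxz.symm
        have := hyz.symm
        rintro (⟨rfl, rfl, rfl⟩ | ⟨rfl, rfl, rfl⟩ | ⟨rfl, rfl, rfl⟩ | ⟨rfl, rfl, rfl⟩ |
          ⟨rfl, rfl, rfl⟩ | ⟨rfl, rfl, rfl⟩) <;>
        refine ⟨⟨by assumption, by assumption, by assumption⟩, ?_⟩ <;> ext w <;> simp <;> tauto
    rw [key]
    simp [Finset.card_insert_of_notMem, h1, h2, h3, h1.symm, h2.symm, h3.symm]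
  · rintro ⟨a, b, c⟩ h
    simp only [Finset.coe_filter, Finset.mem_univ, true_and, Set.mem_ofPred_eq] at h
    simp only [Finset.mem_coe, SimpleGraph.mem_cliqueFinset_iff, SimpleGraph.is3Clique_triple_iff]
    exact ⟨h.1, h.2.2.symm, h.2.1⟩

lemma sum_adjMatrix_row {n : ℕ} (G : SimpleGraph (Fin n)) [DecidableRel G.Adj] (v : Fin n) :
    ∑ w, G.adjMatrix ℝ v w = G.degree v := by
  simp [SimpleGraph.adjMatrix_apply, ← SimpleGraph.card_neighborFinset_eq_degree,
    SimpleGraph.neighborFinset_eq_filter]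

lemma sum_adjMatrix_col {n : ℕ} (G : SimpleGraph (Fin n)) [DecidableRel G.Adj] (v : Fin n) :
    ∑ w, G.adjMatrix ℝ w v = G.degree v := by
  simp_rw [← sum_adjMatrix_row, SimpleGraph.adjMatrix_apply, G.adj_comm _ v]

lemma sum_degree_eq {n : ℕ} (G : SimpleGraph (Fin n)) [DecidableRel G.Adj] :
    ∑ v, (G.degree v : ℝ) = 2 * (G.edgeFinset.card : ℝ) := by
  exact_mod_cast G.sum_degrees_eq_twice_card_edges

/-- Walks `a b c` of length two, counted by their midpoint on the left and split by whether
`a = c` on the right. -/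
lemma sum_degree_sq_eq {n : ℕ} (G : SimpleGraph (Fin n)) [DecidableRel G.Adj] :
    ∑ v, (G.degree v : ℝ) ^ 2 = pathWalks2 G + 2 * (G.edgeFinset.card : ℝ) := by
  have hP : (pathWalks2 G : ℝ) = ∑ a, ∑ b, ∑ c,
      (if G.Adj a b ∧ G.Adj b c ∧ a ≠ b ∧ b ≠ c ∧ a ≠ c then (1 : ℝ) else 0) := by
    simp only [pathWalks2, Finset.card_filter, Nat.cast_sum, Fintype.sum_prod_type,
      Nat.cast_ite, Nat.cast_one, Nat.cast_zero]
  have hpt : ∀ a b c, G.adjMatrix ℝ a b * G.adjMatrix ℝ b c =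
      (if G.Adj a b ∧ G.Adj b c ∧ a ≠ b ∧ b ≠ c ∧ a ≠ c then (1 : ℝ) else 0)
        + (if c = a then G.adjMatrix ℝ a b else 0) := by
    intro a b c
    have h1 : G.Adj a b → a ≠ b := fun h => h.ne
    have h2 : G.Adj b c → b ≠ c := fun h => h.ne
    have h3 := G.adj_comm a b
    simp only [SimpleGraph.adjMatrix_apply]
    grind
  have hW : ∑ v, (G.degree v : ℝ) ^ 2
      = ∑ a, ∑ b, ∑ c, G.adjMatrix ℝ a b * G.adjMatrix ℝ b c := by
    rw [Finset.sum_comm]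
    refine Finset.sum_congr rfl fun b _ => ?_
    simp_rw [← Finset.mul_sum, ← Finset.sum_mul, sum_adjMatrix_row, sum_adjMatrix_col, sq]
  rw [hW, hP, ← sum_degree_eq]
  simp_rw [hpt, Finset.sum_add_distrib, Finset.sum_ite_eq', Finset.mem_univ, if_true,
    sum_adjMatrix_row]

/-- Walks `a b c d` of length three, counted by their middle edge on the left and split by the
coincidences among their vertices on the right. -/
lemma sum_walks_three_eq {n : ℕ} (G : SimpleGraph (Fin n)) [DecidableRel G.Adj] :
    ∑ b, ∑ c, (G.degree b : ℝ) * (G.adjMatrix ℝ b c * G.degree c) =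
      pathWalks3 G + 6 * ((G.cliqueFinset 3).card : ℝ) + 2 * ∑ v, (G.degree v : ℝ) ^ 2
        - 2 * (G.edgeFinset.card : ℝ) := by
  have hP : (pathWalks3 G : ℝ) = ∑ a, ∑ b, ∑ c, ∑ d,
      (if G.Adj a b ∧ G.Adj b c ∧ G.Adj c d ∧ a ≠ b ∧ a ≠ c ∧ a ≠ d ∧ b ≠ c ∧ b ≠ d ∧ c ≠ d
        then (1 : ℝ) else 0) := by
    simp only [pathWalks3, Finset.card_filter, Nat.cast_sum, Fintype.sum_prod_type,
      Nat.cast_ite, Nat.cast_one, Nat.cast_zero]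
  have hT : 6 * ((G.cliqueFinset 3).card : ℝ) = ∑ a, ∑ b, ∑ c,
      (if G.Adj a b ∧ G.Adj b c ∧ G.Adj c a then (1 : ℝ) else 0) := by
    have h := congrArg (Nat.cast : ℕ → ℝ) (card_triangle_triples G)
    simp only [Finset.card_filter, Nat.cast_sum, Fintype.sum_prod_type,
      Nat.cast_ite, Nat.cast_one, Nat.cast_zero, Nat.cast_mul, Nat.cast_ofNat] at h
    exact h.symm
  have hpt : ∀ a b c d,
      G.adjMatrix ℝ a b * (G.adjMatrix ℝ b c * G.adjMatrix ℝ c d) =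
      (if G.Adj a b ∧ G.Adj b c ∧ G.Adj c d ∧ a ≠ b ∧ a ≠ c ∧ a ≠ d ∧ b ≠ c ∧ b ≠ d ∧ c ≠ d
        then (1 : ℝ) else 0)
        + (if d = a then (if G.Adj a b ∧ G.Adj b c ∧ G.Adj c a then (1 : ℝ) else 0) else 0)
        + (if c = a then G.adjMatrix ℝ b a * G.adjMatrix ℝ a d else 0)
        + (if d = b then G.adjMatrix ℝ a b * G.adjMatrix ℝ b c else 0)
        - (if d = b then (if c = a then G.adjMatrix ℝ a b else 0) else 0) := by
    intro a b c d
    have h1 : G.Adj a b → a ≠ b := fun h => h.ne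
    have h2 : G.Adj b c → b ≠ c := fun h => h.ne
    have h3 : G.Adj c d → c ≠ d := fun h => h.ne
    have h4 := G.adj_comm a b
    have h5 := G.adj_comm b c
    simp only [SimpleGraph.adjMatrix_apply]
    grind
  have hW : ∑ b, ∑ c, (G.degree b : ℝ) * (G.adjMatrix ℝ b c * G.degree c)
      = ∑ a, ∑ b, ∑ c, ∑ d,
        G.adjMatrix ℝ a b * (G.adjMatrix ℝ b c * G.adjMatrix ℝ c d) := by
    rw [Finset.sum_comm (s := Finset.univ) (t := Finset.univ)
      (f := fun a b => ∑ c, ∑ d,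
        G.adjMatrix ℝ a b * (G.adjMatrix ℝ b c * G.adjMatrix ℝ c d))]
    refine Finset.sum_congr rfl fun b _ => ?_
    simp_rw [← Finset.mul_sum, ← Finset.sum_mul, sum_adjMatrix_row, sum_adjMatrix_col]
  have hac : ∑ a, ∑ b, ∑ c, ∑ d,
      (if c = a then G.adjMatrix ℝ b a * G.adjMatrix ℝ a d else 0)
        = ∑ v, (G.degree v : ℝ) ^ 2 := by
    refine Finset.sum_congr rfl fun a _ => ?_
    have : ∀ b, ∑ c, ∑ d, (if c = a then G.adjMatrix ℝ b a * G.adjMatrix ℝ a d else 0)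
        = G.adjMatrix ℝ b a * G.degree a := by
      intro b
      rw [Finset.sum_comm]
      simp_rw [Finset.sum_ite_eq', Finset.mem_univ, if_true, ← Finset.mul_sum, sum_adjMatrix_row]
    simp_rw [this, ← Finset.sum_mul, sum_adjMatrix_col, sq]
  have hbd : ∑ a, ∑ b, ∑ c, ∑ d,
      (if d = b then G.adjMatrix ℝ a b * G.adjMatrix ℝ b c else 0)
        = ∑ v, (G.degree v : ℝ) ^ 2 := by
    rw [Finset.sum_comm]
    refine Finset.sum_congr rfl fun b _ => ?_
    simp_rw [Finset.sum_ite_eq', Finset.mem_univ, if_true, ← Finset.mul_sum, ← Finset.sum_mul,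
      sum_adjMatrix_row, sum_adjMatrix_col, sq]
  rw [hW, hP, hT, ← sum_degree_eq]
  simp_rw [hpt, Finset.sum_sub_distrib, Finset.sum_add_distrib]
  rw [hac, hbd]
  simp_rw [Finset.sum_ite_eq', Finset.mem_univ, if_true, Finset.sum_ite_eq', Finset.mem_univ,
    if_true, sum_adjMatrix_row]
  ring

/-- After normalisation both vectors have mean `1`, which gives the closed form of the
covariance. -/
lemma sampleCov_normalized {n : ℕ} (hn : 1 ≤ n) (x y : Fin n → ℝ)
    (hx : ∑ i, x i ≠ 0) (hy : ∑ i, y i ≠ 0) :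
    sampleCov (fun t => (n : ℝ) * x t / ∑ i, x i) (fun t => (n : ℝ) * y t / ∑ i, y i)
      = n * (∑ i, x i * y i) / ((∑ i, x i) * ∑ i, y i) - 1 := by
  have hn' : (n : ℝ) ≠ 0 := by positivity
  have hmean : ∀ z : Fin n → ℝ, ∑ i, z i ≠ 0 →
      (1 : ℝ) / n * ∑ j, (n : ℝ) * z j / ∑ i, z i = 1 := by
    intro z hz
    rw [← Finset.sum_div, ← Finset.mul_sum]
    field_simp
  unfold sampleCov
  simp only [hmean x hx, hmean y hy]
  have hexp : ∀ i, ((n : ℝ) * x i / (∑ i, x i) - 1) * ((n : ℝ) * y i / (∑ i, y i) - 1)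
      = (n : ℝ) ^ 2 / ((∑ i, x i) * ∑ i, y i) * (x i * y i)
        - n / (∑ i, x i) * x i - n / (∑ i, y i) * y i + 1 := by
    intro i
    field_simp
    ring
  simp_rw [hexp, Finset.sum_add_distrib, Finset.sum_sub_distrib, ← Finset.mul_sum]
  simp only [Finset.sum_const, Finset.card_univ, Fintype.card_fin, nsmul_eq_mul]
  field_simp
  ring

/-- Let `A` be the adjacency matrix of a simple undirected graph `G` on `n ≥ 1`
vertices with `m ≥ 1` edges, with `eᵀAe ≠ 0` and `eᵀA²e ≠ 0`. Let `Δ` be the number of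
triangles, `P₂` (resp. `P₃`) the number of distinct simple paths of length 2 (resp. 3), and
`Var(deg)` the degree variance. Then the `(1,2)`-entry of the covariance representation,
`C^A_{1,2} = Cov(n·Ae/(eᵀAe), n·A²e/(eᵀA²e))`, satisfies
`C^A_{1,2} = (n/(2m)) · (3Δ + P₃ + n·Var(deg) + m·(4m/n − 1)) / (P₂ + m) − 1`. -/
theorem covRep_one_two_subgraph_counts {n : ℕ} (hn : 1 ≤ n) (G : SimpleGraph (Fin n))
    [DecidableRel G.Adj] (hm : 1 ≤ G.edgeFinset.card)
    (hd1 : onesVec n ⬝ᵥ ((G.adjMatrix ℝ ^ 1) *ᵥ onesVec n) ≠ 0)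
    (hd2 : onesVec n ⬝ᵥ ((G.adjMatrix ℝ ^ 2) *ᵥ onesVec n) ≠ 0)
    (P₂ P₃ : ℕ) (hP₂ : pathWalks2 G = 2 * P₂) (hP₃ : pathWalks3 G = 2 * P₃) :
    sampleCov
        (fun t => (n : ℝ) * ((G.adjMatrix ℝ ^ 1) *ᵥ onesVec n) t /
          (onesVec n ⬝ᵥ ((G.adjMatrix ℝ ^ 1) *ᵥ onesVec n)))
        (fun t => (n : ℝ) * ((G.adjMatrix ℝ ^ 2) *ᵥ onesVec n) t /
          (onesVec n ⬝ᵥ ((G.adjMatrix ℝ ^ 2) *ᵥ onesVec n)))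
      = ((n : ℝ) / (2 * (G.edgeFinset.card : ℝ))) *
          ((3 * ((G.cliqueFinset 3).card : ℝ) + (P₃ : ℝ) + (n : ℝ) * degVar G +
              (G.edgeFinset.card : ℝ) * (4 * (G.edgeFinset.card : ℝ) / (n : ℝ) - 1)) /
            ((P₂ : ℝ) + (G.edgeFinset.card : ℝ))) - 1 := by
  have h1 : (G.adjMatrix ℝ ^ 1) *ᵥ onesVec n = fun v => (G.degree v : ℝ) := by
    ext v
    rw [pow_one, ← sum_adjMatrix_row]
    simp only [onesVec, Matrix.mulVec, dotProduct, mul_one]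
  have h2 : (G.adjMatrix ℝ ^ 2) *ᵥ onesVec n
      = fun v => ∑ w, G.adjMatrix ℝ v w * (G.degree w : ℝ) := by
    rw [pow_succ', ← Matrix.mulVec_mulVec, h1]
    rfl
  have hdot : ∀ x : Fin n → ℝ, onesVec n ⬝ᵥ x = ∑ i, x i := by
    intro x
    simp [onesVec, dotProduct]
  have hs2 : ∑ v, ∑ w, G.adjMatrix ℝ v w * (G.degree w : ℝ) = ∑ v, (G.degree v : ℝ) ^ 2 := by
    rw [Finset.sum_comm]
    simp_rw [← Finset.sum_mul, sum_adjMatrix_col, sq]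
  rw [h1, hdot] at hd1
  rw [h2, hdot] at hd2
  simp only [h1, h2, hdot]
  rw [sampleCov_normalized hn _ _ hd1 hd2]
  have hs3 : ∑ v, (G.degree v : ℝ) * ∑ w, G.adjMatrix ℝ v w * (G.degree w : ℝ)
      = ∑ b, ∑ c, (G.degree b : ℝ) * (G.adjMatrix ℝ b c * G.degree c) := by
    simp_rw [Finset.mul_sum]
  rw [hs3, sum_walks_three_eq, hs2, degVar, sum_degree_eq, sum_degree_sq_eq, hP₂, hP₃]
  have hn' : (n : ℝ) ≠ 0 := by positivity
  have hm' : (G.edgeFinset.card : ℝ) ≠ 0 := by positivity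
  have hden : (P₂ : ℝ) + (G.edgeFinset.card : ℝ) ≠ 0 := by positivity
  push_cast
  have hden' : 2 * (P₂ : ℝ) + 2 * (G.edgeFinset.card : ℝ) ≠ 0 := by positivity
  field_simp
  ring
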